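/- Let K be a Markov kernel from a measurable space E₁ to a measurable space E₂. Suppose there exist a finite measure λ on E₂ and constants ε₁, ε₂ > 0 with ε₁·ε₂ = ε² and ε² ∈ (0,1), such that ε₁·λ(A) ≤ K(x, A) ≤ (1/ε₂)·λ(A) for every x ∈ E₁ and every measurable A ⊆ E₂. Then for all probability measures μ, ν on E₁, sup_A |(Kμ)(A) − (Kν)(A)| ≤ (1 − ε²) · sup_B |μ(B) − ν(B)|, where the suprema run over measurable subsets of E₂ and E₁ respectively. -/

import Mathlib

open MeasureTheory ProbabilityTheory

/-- Total variation distance `sup_A |μ(A) − ν(A)|` between two measures. -/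
noncomputable def tvDist {E : Type*} [MeasurableSpace E] (μ ν : Measure E) : ℝ :=
  ⨆ s : { s : Set E // MeasurableSet s }, |(μ s).toReal - (ν s).toReal|

lemma aux_le_tv {E : Type*} [MeasurableSpace E] (μ ν : Measure E)
    [IsProbabilityMeasure μ] [IsProbabilityMeasure ν] (s : Set E) (hs : MeasurableSet s) :
    μ.real s - ν.real s ≤ tvDist μ ν := by
  have hb : BddAbove (Set.range fun s : { s : Set E // MeasurableSet s } =>
      |(μ s).toReal - (ν s).toReal|) := by
    refine ⟨1, ?_⟩
    rintro _ ⟨t, rfl⟩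
    have h1 : μ.real t ≤ 1 := measureReal_le_one
    have h2 : ν.real t ≤ 1 := measureReal_le_one
    have h3 : 0 ≤ μ.real t := measureReal_nonneg
    have h4 : 0 ≤ ν.real t := measureReal_nonneg
    change |μ.real t - ν.real t| ≤ 1
    rw [abs_le]
    constructor <;> linarith
  exact (le_abs_self _).trans (le_ciSup hb ⟨s, hs⟩)

lemma aux_tv_comm {E : Type*} [MeasurableSpace E] (μ ν : Measure E) :
    tvDist μ ν = tvDist ν μ := by
  unfold tvDist
  simp_rw [abs_sub_comm]

lemma aux_int {E : Type*} [MeasurableSpace E] (μ ν : Measure E)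
    [IsProbabilityMeasure μ] [IsProbabilityMeasure ν] (g : E → ℝ) (hg : Measurable g)
    (c : ℝ) (h0 : ∀ x, 0 ≤ g x) (hc : ∀ x, g x ≤ c) (hc0 : 0 ≤ c) :
    ∫ x, g x ∂μ - ∫ x, g x ∂ν ≤ c * tvDist μ ν := by
  have hi : ∀ (ρ : Measure E) [IsFiniteMeasure ρ], Integrable g ρ := fun ρ _ =>
    Integrable.of_bound hg.aestronglyMeasurable c
      (Filter.Eventually.of_forall fun x => by
        rw [Real.norm_eq_abs, abs_of_nonneg (h0 x)]; exact hc x)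
  obtain ⟨s, hs⟩ := exists_isHahnDecomposition μ ν
  have hm := hs.measurableSet
  have e1 := integral_add_compl hm (hi μ)
  have e2 := integral_add_compl hm (hi ν)
  have i1 : ∫ x in s, g x ∂μ ≤ ∫ x in s, g x ∂ν :=
    integral_mono_measure hs.le_on (Filter.Eventually.of_forall h0) (hi _)
  have i2 : ∫ x in sᶜ, (c - g x) ∂ν ≤ ∫ x in sᶜ, (c - g x) ∂μ :=
    integral_mono_measure hs.ge_on_compl
      (Filter.Eventually.of_forall fun x => sub_nonneg.2 (hc x)) ((integrable_const c).sub (hi _))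
  rw [integral_sub (integrable_const c) (hi _), integral_sub (integrable_const c) (hi _)] at i2
  simp only [integral_const, smul_eq_mul, measureReal_restrict_apply_univ] at i2
  have := mul_le_mul_of_nonneg_left (aux_le_tv μ ν sᶜ hm.compl) hc0
  nlinarith

/-- An `ε`-mixing Markov kernel is `(1 − ε²)`-contracting in total variation. -/
theorem mixing_kernel_contracting
    {E₁ E₂ : Type*} [MeasurableSpace E₁] [MeasurableSpace E₂]
    (K : Kernel E₁ E₂) (hK : IsMarkovKernel K)
    (lam : Measure E₂) (hlam : IsFiniteMeasure lam)
    (ε ε₁ ε₂ : ℝ) (hε₁ : 0 < ε₁) (hε₂ : 0 < ε₂) (hεsq : ε₁ * ε₂ = ε ^ 2)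
    (hε : ε ^ 2 ∈ Set.Ioo (0 : ℝ) 1)
    (hmix : ∀ x, ∀ A : Set E₂, MeasurableSet A →
      ENNReal.ofReal ε₁ * lam A ≤ K x A ∧ K x A ≤ ENNReal.ofReal (1 / ε₂) * lam A)
    (μ ν : Measure E₁) (hμ : IsProbabilityMeasure μ) (hν : IsProbabilityMeasure ν) :
    tvDist (μ.bind K) (ν.bind K) ≤ (1 - ε ^ 2) * tvDist μ ν := by
  have key : ∀ (μ ν : Measure E₁) [IsProbabilityMeasure μ] [IsProbabilityMeasure ν]
      (A : Set E₂), MeasurableSet A →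
      ((μ.bind K) A).toReal - ((ν.bind K) A).toReal ≤ (1 - ε ^ 2) * tvDist μ ν := by
    intro μ ν _ _ A hA
    have hmeas : Measurable fun x => (K x A).toReal := (K.measurable_coe hA).ennreal_toReal
    have e : ∀ (ρ : Measure E₁) [IsProbabilityMeasure ρ],
        ((ρ.bind K) A).toReal = ∫ x, (K x A).toReal ∂ρ := by
      intro ρ _
      rw [Measure.bind_apply hA K.measurable.aemeasurable,
        integral_toReal (K.measurable_coe hA).aemeasurable
          (Filter.Eventually.of_forall fun x => measure_lt_top _ _)]
    have hi : ∀ (ρ : Measure E₁) [IsProbabilityMeasure ρ],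
        Integrable (fun x => (K x A).toReal) ρ := fun ρ _ =>
      Integrable.of_bound hmeas.aestronglyMeasurable 1
        (Filter.Eventually.of_forall fun x => by
          rw [Real.norm_eq_abs, abs_of_nonneg ENNReal.toReal_nonneg]
          exact measureReal_le_one (μ := K x))
    have lo : ∀ x, ε₁ * (lam A).toReal ≤ (K x A).toReal := fun x => by
      have := ENNReal.toReal_mono (measure_ne_top _ _) (hmix x A hA).1
      rwa [ENNReal.toReal_mul, ENNReal.toReal_ofReal hε₁.le] at this
    have up : ∀ x, (K x A).toReal * ε₂ ≤ (lam A).toReal := fun x => by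
      have := ENNReal.toReal_mono
        (ENNReal.mul_ne_top ENNReal.ofReal_ne_top (measure_ne_top _ _)) (hmix x A hA).2
      rw [ENNReal.toReal_mul, ENNReal.toReal_ofReal (by positivity)] at this
      rw [← le_div_iff₀ hε₂]
      calc _ ≤ _ := this
        _ = _ := by ring
    have h := aux_int μ ν (fun x => (K x A).toReal - ε₁ * (lam A).toReal)
      (hmeas.sub_const _) (1 - ε ^ 2) (fun x => sub_nonneg.2 (lo x)) (fun x => by
        have h1 : (K x A).toReal ≤ 1 := measureReal_le_one (μ := K x)
        have h2 := mul_le_mul_of_nonneg_left (up x) hε₁.le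
        have h3 : ε₁ * ((K x A).toReal * ε₂) = ε ^ 2 * (K x A).toReal := by
          rw [← hεsq]; ring
        have h4 := mul_le_mul_of_nonneg_left h1 (sub_nonneg.2 hε.2.le)
        linarith) (sub_nonneg.2 hε.2.le)
    rw [integral_sub (hi _) (integrable_const _), integral_sub (hi _) (integrable_const _)] at h
    simp only [integral_const, probReal_univ, one_smul] at h
    rw [e, e]
    linarith
  haveI : Nonempty { s : Set E₂ // MeasurableSet s } := ⟨⟨∅, MeasurableSet.empty⟩⟩
  refine ciSup_le fun A => abs_le.2 ⟨?_, key μ ν A A.2⟩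
  have := key ν μ A A.2
  rw [aux_tv_comm] at this
  linarith
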